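/- There are exactly 6 conjugacy classes of finite-index subgroups Γ̄ of PSL(2,ℤ) that have genus zero and satisfy n + 3·e₂(Γ̄) + 2·e₃(Γ̄) = 6, where n is the index of Γ̄. Moreover, among these 6 classes exactly 2 are torsion-free and exactly 4 contain a nontrivial element of finite order. -/

import Mathlib

open Matrix

/-- `SL(2,ℤ)`: the group of 2×2 integer matrices of determinant 1. -/
abbrev SL2Z := Matrix.SpecialLinearGroup (Fin 2) ℤ

instance : Fact (Even (Fintype.card (Fin 2))) := ⟨by simp⟩

/-- The subgroup `{±I}` of `SL(2,ℤ)`. -/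
def pmOne : Subgroup SL2Z := Subgroup.zpowers (-1 : SL2Z)

instance : pmOne.Normal := by
  constructor
  intro x hx g
  obtain ⟨n, rfl⟩ := hx
  have h : Commute ((-1 : SL2Z) ^ n) g := (Commute.neg_one_left g).zpow_left n
  refine ⟨n, ?_⟩
  rw [← h.eq, mul_assoc, mul_inv_cancel, mul_one]

/-- `PSL(2,ℤ)`, the modular group, as the quotient of `SL(2,ℤ)` by `{±I}`. -/
abbrev PSL2Z := SL2Z ⧸ pmOne

/-- The natural projection `ξ : SL(2,ℤ) → PSL(2,ℤ)`. -/
def xi : SL2Z →* PSL2Z := QuotientGroup.mk' pmOne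

/-- The element `S` of `PSL(2,ℤ)`, the image of `[[0,-1],[1,0]]`. -/
def Sp : PSL2Z := xi ⟨!![0, -1; 1, 0], by norm_num [Matrix.det_fin_two_of]⟩

/-- The element `T` of `PSL(2,ℤ)`, the image of `[[1,1],[0,1]]`. -/
def Tp : PSL2Z := xi ⟨!![1, 1; 0, 1], by norm_num [Matrix.det_fin_two_of]⟩

/-- The number of left cosets in `PSL(2,ℤ)/Γ` fixed by `g` (for the
left-multiplication action).  For `g = S` this is `e₂(Γ)`, for `g = S*T` it is `e₃(Γ)`. -/
noncomputable def nFix (g : PSL2Z) (Γ : Subgroup PSL2Z) : ℕ :=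
  Nat.card {x : PSL2Z ⧸ Γ // g • x = x}

/-- The number of orbits of the cyclic subgroup generated by `g` on `PSL(2,ℤ)/Γ`.
For `g = S, S*T, T` these are `c₂(Γ), c₃(Γ), h(Γ)` respectively. -/
noncomputable def nOrb (g : PSL2Z) (Γ : Subgroup PSL2Z) : ℕ :=
  Nat.card (MulAction.orbitRel.Quotient (Subgroup.zpowers g) (PSL2Z ⧸ Γ))

/-- `Γ` has genus zero: `c₂(Γ) + c₃(Γ) + h(Γ) = index(Γ) + 2`. -/
def GenusZero (Γ : Subgroup PSL2Z) : Prop :=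
  nOrb Sp Γ + nOrb (Sp * Tp) Γ + nOrb Tp Γ = Γ.index + 2

/-- `Γ` is torsion free: it contains no nontrivial element of finite order. -/
def TorsionFree (Γ : Subgroup PSL2Z) : Prop :=
  ∀ x ∈ Γ, x ≠ 1 → ¬ IsOfFinOrder x

/-- Two subgroups of a group are conjugate. -/
def SubgroupConj {G : Type*} [Group G] (H K : Subgroup G) : Prop :=
  ∃ g : G, Subgroup.map (MulAut.conj g).toMonoidHom H = K

/-- The number of conjugacy classes of subgroups of `PSL(2,ℤ)` satisfying `P`. -/
noncomputable def countClasses (P : Subgroup PSL2Z → Prop) : ℕ :=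
  Nat.card (Quot fun A B : {Γ : Subgroup PSL2Z // P Γ} => SubgroupConj A.1 B.1)

/-- The index of the torsion free subgroup `Γ^tf` associated to `Γ`:
`index(Γ) + 3·e₂(Γ) + 2·e₃(Γ)`. -/
noncomputable def tfIdx (Γ : Subgroup PSL2Z) : ℕ :=
  Γ.index + 3 * nFix Sp Γ + 2 * nFix (Sp * Tp) Γ

/-! ### Generation and basic relations -/

lemma Sp_def : Sp = xi ModularGroup.S := rfl

lemma Tp_def : Tp = xi ModularGroup.T := rfl

lemma Sp_sq : Sp * Sp = 1 := by
  rw [Sp_def, ← map_mul]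
  refine (QuotientGroup.eq_one_iff _).2 ?_
  refine ⟨1, ?_⟩
  ext i j
  fin_cases i <;> fin_cases j <;>
    simp [ModularGroup.coe_S, Matrix.mul_apply, Fin.sum_univ_two]

lemma R_cube : (Sp * Tp) * ((Sp * Tp) * (Sp * Tp)) = 1 := by
  rw [Sp_def, Tp_def, ← map_mul, ← map_mul, ← map_mul]
  refine (QuotientGroup.eq_one_iff _).2 ?_
  refine ⟨1, ?_⟩
  ext i j
  fin_cases i <;> fin_cases j <;>
    simp [ModularGroup.coe_S, ModularGroup.coe_T, Matrix.mul_apply, Fin.sum_univ_two]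

lemma Tp_eq : Tp = Sp * (Sp * Tp) := by rw [← mul_assoc, Sp_sq, one_mul]

lemma gen_top (H : Subgroup PSL2Z) (hS : Sp ∈ H) (hR : Sp * Tp ∈ H) (g : PSL2Z) : g ∈ H := by
  have hT : Tp ∈ H := by rw [Tp_eq]; exact H.mul_mem hS hR
  obtain ⟨A, rfl⟩ := QuotientGroup.mk'_surjective pmOne g
  have hA : A ∈ Subgroup.closure {ModularGroup.S, ModularGroup.T} := by
    rw [SpecialLinearGroup.SL2Z_generators]; trivial
  have hle : Subgroup.closure {ModularGroup.S, ModularGroup.T} ≤ H.comap (QuotientGroup.mk' pmOne) := by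
    rw [Subgroup.closure_le]
    rintro x (rfl | rfl)
    · exact hS
    · exact hT
  exact hle hA

lemma equivariant {X Y : Type*} [MulAction PSL2Z X] [MulAction PSL2Z Y] (F : X → Y)
    (hS : ∀ x, F (Sp • x) = Sp • F x) (hR : ∀ x, F ((Sp * Tp) • x) = (Sp * Tp) • F x)
    (g : PSL2Z) : ∀ x, F (g • x) = g • F x := by
  let H : Subgroup PSL2Z :=
    { carrier := {g | ∀ x, F (g • x) = g • F x}
      one_mem' := by intro x; simp
      mul_mem' := by
        intro a b ha hb x
        rw [mul_smul, ha, hb, mul_smul]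
      inv_mem' := by
        intro a ha x
        have := ha (a⁻¹ • x)
        rw [smul_inv_smul] at this
        rw [this, inv_smul_smul] }
  exact gen_top H hS hR g

lemma invariant_all {Γ : Subgroup PSL2Z} (P : PSL2Z ⧸ Γ → Prop) (x₀ : PSL2Z ⧸ Γ) (h₀ : P x₀)
    (hS : ∀ x, P x → P (Sp • x)) (hR : ∀ x, P x → P ((Sp * Tp) • x)) : ∀ x, P x := by
  let H : Subgroup PSL2Z :=
    { carrier := {g | ∀ x, P x ↔ P (g • x)}
      one_mem' := by intro x; simp
      mul_mem' := by
        intro a b ha hb x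
        rw [mul_smul, hb x, ha (b • x)]
      inv_mem' := by
        intro a ha x
        have := ha (a⁻¹ • x)
        rw [smul_inv_smul] at this
        exact this.symm }
  have hSH : Sp ∈ H := by
    intro x
    refine ⟨hS x, fun h => ?_⟩
    have := hS _ h
    rwa [← mul_smul, Sp_sq, one_smul] at this
  have hRH : Sp * Tp ∈ H := by
    intro x
    refine ⟨hR x, fun h => ?_⟩
    have := hR _ (hR _ h)
    rwa [← mul_smul, ← mul_smul, mul_assoc, R_cube, one_smul] at this
  intro x
  obtain ⟨g, rfl⟩ := MulAction.exists_smul_eq PSL2Z x₀ x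
  exact (gen_top H hSH hRH g x₀).1 h₀

/-! ### Combinatorial models of coset spaces -/

/-- `Γ` has coset space isomorphic to `Fin n` with `S` acting by `σ` and `ST` by `τ`. -/
def HasModel (Γ : Subgroup PSL2Z) (n : ℕ) (σ τ : Fin n → Fin n) : Prop :=
  ∃ v : Fin n → PSL2Z ⧸ Γ, Function.Bijective v ∧ (∀ i, Sp • v i = v (σ i)) ∧
    (∀ i, (Sp * Tp) • v i = v (τ i))

lemma conj_of_model {Γ Γ' : Subgroup PSL2Z} {n : ℕ} {σ τ : Fin n → Fin n}
    (h : HasModel Γ n σ τ) (h' : HasModel Γ' n σ τ) : SubgroupConj Γ Γ' := by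
  obtain ⟨v, hv, hS, hR⟩ := h
  obtain ⟨w, hw, hS', hR'⟩ := h'
  let e := Equiv.ofBijective v hv
  let F : PSL2Z ⧸ Γ → PSL2Z ⧸ Γ' := fun x => w (e.symm x)
  have key : ∀ i, F (v i) = w i := fun i => by
    change w (e.symm (e i)) = w i
    rw [Equiv.symm_apply_apply]
  have hinj : Function.Injective F := hw.1.comp e.symm.injective
  have hF : ∀ (g : PSL2Z) (x : PSL2Z ⧸ Γ), F (g • x) = g • F x := by
    apply equivariant
    · intro x
      obtain ⟨i, rfl⟩ := hv.2 x
      rw [hS, key, key, hS']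
    · intro x
      obtain ⟨i, rfl⟩ := hv.2 x
      rw [hR, key, key, hR']
  obtain ⟨k, hk⟩ := QuotientGroup.mk_surjective (F ((1 : PSL2Z) : PSL2Z ⧸ Γ))
  have mem : ∀ g, g ∈ Γ ↔ k⁻¹ * g * k ∈ Γ' := by
    intro g
    have h1 : g ∈ Γ ↔ g • ((1 : PSL2Z) : PSL2Z ⧸ Γ) = ((1 : PSL2Z) : PSL2Z ⧸ Γ) := by
      rw [MulAction.Quotient.smul_coe, eq_comm, QuotientGroup.eq]; simp
    rw [h1, ← hinj.eq_iff, hF, ← hk, MulAction.Quotient.smul_coe, eq_comm, QuotientGroup.eq]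
    simp [mul_assoc]
  refine ⟨k⁻¹, ?_⟩
  ext g
  simp only [Subgroup.mem_map, MulEquiv.coe_toMonoidHom, MulAut.conj_apply, inv_inv]
  constructor
  · rintro ⟨x, hx, rfl⟩
    exact (mem x).1 hx
  · intro hg
    refine ⟨k * g * k⁻¹, ?_, by group⟩
    rw [mem]
    convert hg using 1
    group

lemma index_of_bij {Γ : Subgroup PSL2Z} {n : ℕ} {v : Fin n → PSL2Z ⧸ Γ}
    (hv : Function.Bijective v) : Γ.index = n := by
  rw [Subgroup.index, ← Nat.card_eq_of_bijective v hv, Nat.card_fin]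

lemma nFix_of_bij {Γ : Subgroup PSL2Z} {n : ℕ} {v : Fin n → PSL2Z ⧸ Γ}
    (hv : Function.Bijective v) (g : PSL2Z) (ρ : Fin n → Fin n) (h : ∀ i, g • v i = v (ρ i)) :
    nFix g Γ = Fintype.card {i // ρ i = i} := by
  rw [nFix, ← Nat.card_eq_fintype_card]
  symm
  apply Nat.card_congr
  refine (Equiv.ofBijective v hv).subtypeEquiv ?_
  intro i
  change ρ i = i ↔ g • v i = v i
  rw [h, hv.1.eq_iff]

lemma nOrb_of_bij {Γ : Subgroup PSL2Z} {n m : ℕ} {v : Fin n → PSL2Z ⧸ Γ}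
    (hv : Function.Bijective v) (g : PSL2Z) (ρ : Fin n → Fin n) (h : ∀ i, g • v i = v (ρ i))
    (c : Fin n → Fin m) (hc : Function.Surjective c) (hρ : ∀ i, c (ρ i) = c i)
    (ho : ∀ i j, c i = c j → ∃ k < 6, ρ^[k] i = j) : nOrb g Γ = m := by
  let e := Equiv.ofBijective v hv
  let F : PSL2Z ⧸ Γ → Fin m := fun x => c (e.symm x)
  have key : ∀ i, F (v i) = c i := fun i => by
    change c (e.symm (e i)) = c i
    rw [Equiv.symm_apply_apply]
  have hg : ∀ x, F (g • x) = F x := by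
    intro x
    obtain ⟨i, rfl⟩ := hv.2 x
    rw [h, key, key, hρ]
  have hz : ∀ a ∈ Subgroup.zpowers g, ∀ x, F (a • x) = F x := by
    let H : Subgroup PSL2Z :=
      { carrier := {a | ∀ x, F (a • x) = F x}
        one_mem' := by intro x; simp
        mul_mem' := by
          intro a b ha hb x
          rw [mul_smul, ha, hb]
        inv_mem' := by
          intro a ha x
          have := ha (a⁻¹ • x)
          rw [smul_inv_smul] at this
          exact this.symm }
    have : Subgroup.zpowers g ≤ H := by
      rw [Subgroup.zpowers_le]; exact hg
    exact fun a ha => this ha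
  have hpow : ∀ (k : ℕ) (i : Fin n), g ^ k • v i = v (ρ^[k] i) := by
    intro k
    induction k with
    | zero => intro i; simp
    | succ k ih => intro i; rw [pow_succ, mul_smul, h, ih, Function.iterate_succ_apply]
  let Q : MulAction.orbitRel.Quotient (Subgroup.zpowers g) (PSL2Z ⧸ Γ) → Fin m :=
    Quotient.lift F (by
      rintro x y ⟨a, rfl⟩
      exact hz a.1 a.2 y)
  have hQ : Function.Bijective Q := by
    constructor
    · intro a b
      induction a using Quotient.inductionOn with | _ x
      induction b using Quotient.inductionOn with | _ y
      intro hxy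
      obtain ⟨i, rfl⟩ := hv.2 x
      obtain ⟨j, rfl⟩ := hv.2 y
      change F (v i) = F (v j) at hxy
      rw [key, key] at hxy
      obtain ⟨k, -, hk⟩ := ho j i hxy.symm
      apply Quotient.sound
      refine ⟨⟨g ^ k, Subgroup.npow_mem_zpowers g k⟩, ?_⟩
      change g ^ k • v j = v i
      rw [hpow, hk]
    · intro a
      obtain ⟨i, rfl⟩ := hc a
      exact ⟨Quotient.mk _ (v i), key i⟩
  rw [nOrb, Nat.card_eq_of_bijective Q hQ, Nat.card_fin]

lemma T_smul_of {Γ : Subgroup PSL2Z} {n : ℕ} {v : Fin n → PSL2Z ⧸ Γ} {σ τ : Fin n → Fin n}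
    (hS : ∀ i, Sp • v i = v (σ i)) (hR : ∀ i, (Sp * Tp) • v i = v (τ i)) :
    ∀ i, Tp • v i = v (σ (τ i)) := by
  intro i
  rw [Tp_eq, mul_smul, hR, hS]

/-! ### The six models (and their orbit data) -/

/-- All invariants of a group with a given model. -/
lemma model_props {Γ : Subgroup PSL2Z} {n a b m : ℕ} {σ τ : Fin n → Fin n}
    (h : HasModel Γ n σ τ)
    (c₂ : Fin n → Fin a) (c₃ : Fin n → Fin b) (c : Fin n → Fin m)
    (h2 : Function.Surjective c₂ ∧ (∀ i, c₂ (σ i) = c₂ i) ∧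
      ∀ i j, c₂ i = c₂ j → ∃ k < 6, σ^[k] i = j)
    (h3 : Function.Surjective c₃ ∧ (∀ i, c₃ (τ i) = c₃ i) ∧
      ∀ i j, c₃ i = c₃ j → ∃ k < 6, τ^[k] i = j)
    (hT : Function.Surjective c ∧ (∀ i, c (σ (τ i)) = c i) ∧
      ∀ i j, c i = c j → ∃ k < 6, (fun i => σ (τ i))^[k] i = j)
    (hn : n ≠ 0) (hg : a + b + m = n + 2)
    (htf : n + 3 * Fintype.card {i // σ i = i} + 2 * Fintype.card {i // τ i = i} = 6) :
    Γ.index ≠ 0 ∧ GenusZero Γ ∧ tfIdx Γ = 6 := by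
  obtain ⟨v, hv, hS, hR⟩ := h
  have hi := index_of_bij hv
  refine ⟨by rw [hi]; exact hn, ?_, ?_⟩
  · rw [GenusZero, hi, nOrb_of_bij hv Sp σ hS c₂ h2.1 h2.2.1 h2.2.2,
      nOrb_of_bij hv (Sp * Tp) τ hR c₃ h3.1 h3.2.1 h3.2.2,
      nOrb_of_bij hv Tp (fun i => σ (τ i)) (T_smul_of hS hR) c hT.1 hT.2.1 hT.2.2]
    exact hg
  · rw [tfIdx, hi, nFix_of_bij hv Sp σ hS, nFix_of_bij hv (Sp * Tp) τ hR]
    exact htf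

/-- Degree 1. -/
def M1 (Γ : Subgroup PSL2Z) : Prop := HasModel Γ 1 ![0] ![0]
/-- Degree 2. -/
def M2 (Γ : Subgroup PSL2Z) : Prop := HasModel Γ 2 ![1, 0] ![0, 1]
/-- Degree 3. -/
def M3 (Γ : Subgroup PSL2Z) : Prop := HasModel Γ 3 ![0, 2, 1] ![1, 2, 0]
/-- Degree 4. -/
def M4 (Γ : Subgroup PSL2Z) : Prop := HasModel Γ 4 ![1, 0, 3, 2] ![0, 2, 3, 1]
/-- Degree 6, the dumbbell. -/
def M5 (Γ : Subgroup PSL2Z) : Prop := HasModel Γ 6 ![3, 2, 1, 0, 5, 4] ![1, 2, 0, 4, 5, 3]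
/-- Degree 6, the planar theta graph. -/
def M6 (Γ : Subgroup PSL2Z) : Prop := HasModel Γ 6 ![3, 5, 4, 0, 2, 1] ![1, 2, 0, 4, 5, 3]

lemma M1_props {Γ} (h : M1 Γ) : Γ.index ≠ 0 ∧ GenusZero Γ ∧ tfIdx Γ = 6 :=
  model_props h (a := 1) (b := 1) (m := 1) ![0] ![0] ![0]
    (by decide) (by decide) (by decide) (by decide) (by decide) (by decide)
lemma M2_props {Γ} (h : M2 Γ) : Γ.index ≠ 0 ∧ GenusZero Γ ∧ tfIdx Γ = 6 :=
  model_props h (a := 1) (b := 2) (m := 1) ![0, 0] ![0, 1] ![0, 0]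
    (by decide) (by decide) (by decide) (by decide) (by decide) (by decide)
lemma M3_props {Γ} (h : M3 Γ) : Γ.index ≠ 0 ∧ GenusZero Γ ∧ tfIdx Γ = 6 :=
  model_props h (a := 2) (b := 1) (m := 2) ![0, 1, 1] ![0, 0, 0] ![0, 1, 0]
    (by decide) (by decide) (by decide) (by decide) (by decide) (by decide)
lemma M4_props {Γ} (h : M4 Γ) : Γ.index ≠ 0 ∧ GenusZero Γ ∧ tfIdx Γ = 6 :=
  model_props h (a := 2) (b := 2) (m := 2) ![0, 0, 1, 1] ![0, 1, 1, 1] ![0, 0, 1, 0]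
    (by decide) (by decide) (by decide) (by decide) (by decide) (by decide)
lemma M5_props {Γ} (h : M5 Γ) : Γ.index ≠ 0 ∧ GenusZero Γ ∧ tfIdx Γ = 6 :=
  model_props h (a := 3) (b := 2) (m := 3) ![0, 1, 1, 0, 2, 2] ![0, 0, 0, 1, 1, 1]
    ![0, 1, 0, 0, 2, 0]
    (by decide) (by decide) (by decide) (by decide) (by decide) (by decide)
lemma M6_props {Γ} (h : M6 Γ) : Γ.index ≠ 0 ∧ GenusZero Γ ∧ tfIdx Γ = 6 :=
  model_props h (a := 3) (b := 2) (m := 3) ![0, 1, 2, 0, 2, 1] ![0, 0, 0, 1, 1, 1]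
    ![0, 1, 2, 2, 1, 0]
    (by decide) (by decide) (by decide) (by decide) (by decide) (by decide)

/-! ### Classification -/

lemma bij_of_card {X : Type*} {n : ℕ} (hn : n ≠ 0) (hX : Nat.card X = n) (v : Fin n → X)
    (h : Function.Injective v) : Function.Bijective v := by
  have : Finite X := Nat.finite_of_card_ne_zero (by omega)
  have := Fintype.ofFinite X
  rw [Fintype.bijective_iff_injective_and_card]
  refine ⟨h, ?_⟩
  rw [Nat.card_eq_fintype_card] at hX
  simp [hX]

section abstract_classification
variable {X : Type*}

lemma abs3 (hX : Nat.card X = 3) (s t : X → X) (hs : ∀ x, s (s x) = x)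
    (ht : ∀ x, t (t (t x)) = x) (p : X) (hp : s p = p) (hpu : ∀ x, s x = x → x = p)
    (f3 : ∀ x, t x ≠ x) : ∃ v : Fin 3 → X, Function.Bijective v ∧
      (∀ i, s (v i) = v (![0, 2, 1] i)) ∧ (∀ i, t (v i) = v (![1, 2, 0] i)) := by
  have hb : Function.Bijective ![p, t p, t (t p)] := by
    refine bij_of_card (by omega) hX _ ?_
    intro i j hij
    fin_cases i <;> fin_cases j <;> simp at hij ⊢ <;> grind
  have cov : ∀ x, x = p ∨ x = t p ∨ x = t (t p) := by
    intro x
    obtain ⟨i, rfl⟩ := hb.2 x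
    fin_cases i <;> simp
  have key : s (t p) = t (t p) := by
    have := cov (s (t p))
    grind
  refine ⟨_, hb, ?_, ?_⟩
  · intro i; fin_cases i <;> simp <;> grind
  · intro i; fin_cases i <;> simp <;> grind

lemma abs4 (hX : Nat.card X = 4) (s t : X → X) (hs : ∀ x, s (s x) = x)
    (ht : ∀ x, t (t (t x)) = x) (p : X) (hp : t p = p) (hpu : ∀ x, t x = x → x = p)
    (f2 : ∀ x, s x ≠ x) : ∃ v : Fin 4 → X, Function.Bijective v ∧
      (∀ i, s (v i) = v (![1, 0, 3, 2] i)) ∧ (∀ i, t (v i) = v (![0, 2, 3, 1] i)) := by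
  have hb : Function.Bijective ![p, s p, t (s p), t (t (s p))] := by
    refine bij_of_card (by omega) hX _ ?_
    intro i j hij
    fin_cases i <;> fin_cases j <;> simp at hij ⊢ <;> grind
  have cov : ∀ x, x = p ∨ x = s p ∨ x = t (s p) ∨ x = t (t (s p)) := by
    intro x
    obtain ⟨i, rfl⟩ := hb.2 x
    fin_cases i <;> simp
  have key : s (t (s p)) = t (t (s p)) := by
    have := cov (s (t (s p)))
    grind
  refine ⟨_, hb, ?_, ?_⟩
  · intro i; fin_cases i <;> simp <;> grind
  · intro i; fin_cases i <;> simp <;> grind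

lemma abs6 (hX : Nat.card X = 6) (s t : X → X) (hs : ∀ x, s (s x) = x)
    (ht : ∀ x, t (t (t x)) = x) (f2 : ∀ x, s x ≠ x) (f3 : ∀ x, t x ≠ x)
    (p : X) (h1 : s p ≠ t p) (h2 : s p ≠ t (t p)) :
    ∃ v : Fin 6 → X, Function.Bijective v ∧ (∀ i, t (v i) = v (![1, 2, 0, 4, 5, 3] i)) ∧
      ((∀ i, s (v i) = v (![3, 2, 1, 0, 5, 4] i)) ∨ (∀ i, s (v i) = v (![3, 4, 5, 0, 1, 2] i)) ∨
        (∀ i, s (v i) = v (![3, 5, 4, 0, 2, 1] i))) := by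
  have h0 := f2 p
  have hs0 := hs p
  generalize hq : s p = q at *
  have hb : Function.Bijective ![p, t p, t (t p), q, t q, t (t q)] := by
    refine bij_of_card (by omega) hX _ ?_
    intro i j hij
    fin_cases i <;> fin_cases j <;> simp at hij ⊢ <;> grind
  have cov : ∀ x, x = p ∨ x = t p ∨ x = t (t p) ∨ x = q ∨ x = t q ∨ x = t (t q) := by
    intro x
    obtain ⟨i, rfl⟩ := hb.2 x
    fin_cases i <;> simp
  have c1 := cov (s (t p))
  have c2 := cov (s (t (t p)))
  have c4 := cov (s (t q))
  have c5 := cov (s (t (t q)))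
  have hinj := hb.1
  have ne : ∀ i j : Fin 6, i ≠ j → (![p, t p, t (t p), q, t q, t (t q)] : Fin 6 → X) i ≠
      (![p, t p, t (t p), q, t q, t (t q)] : Fin 6 → X) j := fun i j h h' => h (hinj h')
  refine ⟨_, hb, ?_, ?_⟩
  · intro i; fin_cases i <;> simp <;> grind
  · have hcase : s (t p) = t (t p) ∨ s (t p) = t q ∨ s (t p) = t (t q) := by grind
    rcases hcase with h | h | h
    · left
      have h' : s (t q) = t (t q) := by grind
      intro i; fin_cases i <;> simp <;> grind
    · right; left
      have h' : s (t (t p)) = t (t q) := by grind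
      intro i; fin_cases i <;> simp <;> grind
    · right; right
      have h' : s (t (t p)) = t q := by grind
      intro i; fin_cases i <;> simp <;> grind

end abstract_classification

section classify
variable {Γ : Subgroup PSL2Z}

lemma SS (x : PSL2Z ⧸ Γ) : Sp • Sp • x = x := by rw [← mul_smul, Sp_sq, one_smul]
lemma RRR (x : PSL2Z ⧸ Γ) : (Sp * Tp) • (Sp * Tp) • (Sp * Tp) • x = x := by
  rw [← mul_smul, ← mul_smul, mul_assoc, R_cube, one_smul]

lemma fix_zero (hi : Γ.index ≠ 0) {g : PSL2Z} (h : nFix g Γ = 0) (x : PSL2Z ⧸ Γ) : g • x ≠ x := by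
  have : Finite (PSL2Z ⧸ Γ) := Nat.finite_of_card_ne_zero hi
  intro hx
  rw [nFix, Finite.card_eq_zero_iff] at h
  exact h.false ⟨x, hx⟩

lemma fix_one {g : PSL2Z} (h : nFix g Γ = 1) :
    ∃ p : PSL2Z ⧸ Γ, g • p = p ∧ ∀ x, g • x = x → x = p := by
  rw [nFix, Nat.card_eq_one_iff_exists] at h
  obtain ⟨⟨p, hp⟩, h⟩ := h
  exact ⟨p, hp, fun x hx => congrArg Subtype.val (h ⟨x, hx⟩)⟩

lemma fix_all (hi : Γ.index ≠ 0) {g : PSL2Z} (h : nFix g Γ = Γ.index) (x : PSL2Z ⧸ Γ) :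
    g • x = x := by
  have : Finite (PSL2Z ⧸ Γ) := Nat.finite_of_card_ne_zero hi
  have hb : Function.Bijective (Subtype.val : {x : PSL2Z ⧸ Γ // g • x = x} → _) :=
    (Nat.bijective_iff_injective_and_card _).2 ⟨Subtype.val_injective, h⟩
  obtain ⟨y, rfl⟩ := hb.2 x
  exact y.2

lemma class1 (hi : Γ.index = 1) : M1 Γ := by
  have : Subsingleton (PSL2Z ⧸ Γ) := (Nat.card_eq_one_iff_unique.1 hi).1
  refine ⟨fun _ => ((1 : PSL2Z) : PSL2Z ⧸ Γ), ⟨?_, ?_⟩, ?_, ?_⟩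
  · intro i j _; exact Subsingleton.elim _ _
  · intro x; exact ⟨0, Subsingleton.elim _ _⟩
  · intro i; exact Subsingleton.elim _ _
  · intro i; exact Subsingleton.elim _ _

lemma class2 (hi : Γ.index = 2) (h2 : nFix Sp Γ = 0) (h3 : nFix (Sp * Tp) Γ = 2) : M2 Γ := by
  have f2 := fix_zero (by omega) h2
  have f3 := fix_all (Γ := Γ) (by omega) (h3.trans hi.symm)
  let p : PSL2Z ⧸ Γ := ((1 : PSL2Z) : PSL2Z ⧸ Γ)
  have hp := f2 p
  refine ⟨![p, Sp • p], bij_of_card (by omega) hi _ ?_, ?_, ?_⟩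
  · intro i j hij
    fin_cases i <;> fin_cases j <;> simp at hij ⊢ <;> grind
  · intro i; fin_cases i <;> simp [SS]
  · intro i; fin_cases i <;> simp [f3]

lemma class3 (hi : Γ.index = 3) (h2 : nFix Sp Γ = 1) (h3 : nFix (Sp * Tp) Γ = 0) : M3 Γ := by
  obtain ⟨p, hp, hpu⟩ := fix_one h2
  have f3 := fix_zero (by omega) h3
  obtain ⟨v, hv⟩ := abs3 hi (fun x => Sp • x) (fun x => (Sp * Tp) • x) SS RRR p hp hpu f3
  exact ⟨v, hv⟩

lemma class4 (hi : Γ.index = 4) (h2 : nFix Sp Γ = 0) (h3 : nFix (Sp * Tp) Γ = 1) : M4 Γ := by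
  obtain ⟨p, hp, hpu⟩ := fix_one h3
  have f2 := fix_zero (by omega) h2
  obtain ⟨v, hv⟩ := abs4 hi (fun x => Sp • x) (fun x => (Sp * Tp) • x) SS RRR p hp hpu f2
  exact ⟨v, hv⟩

lemma class6 (hi : Γ.index = 6) (h2 : nFix Sp Γ = 0) (h3 : nFix (Sp * Tp) Γ = 0)
    (hg : GenusZero Γ) : M5 Γ ∨ M6 Γ := by
  have f2 := fix_zero (by omega) h2
  have f3 := fix_zero (by omega) h3
  obtain ⟨x, hx⟩ : ∃ x : PSL2Z ⧸ Γ, Sp • x ≠ (Sp * Tp) • x ∧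
      Sp • x ≠ (Sp * Tp) • (Sp * Tp) • x := by
    by_contra hcon
    push Not at hcon
    let p : PSL2Z ⧸ Γ := ((1 : PSL2Z) : PSL2Z ⧸ Γ)
    let w : Fin 3 → PSL2Z ⧸ Γ := ![p, (Sp * Tp) • p, (Sp * Tp) • (Sp * Tp) • p]
    have hsurj : Function.Surjective w := by
      have := invariant_all (fun x => ∃ i, w i = x) p ⟨0, rfl⟩ ?_ ?_
      · exact this
      · rintro _ ⟨i, rfl⟩
        have := hcon (w i)
        by_cases h : Sp • w i = (Sp * Tp) • w i
        · rw [h]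
          fin_cases i
          · exact ⟨1, rfl⟩
          · exact ⟨2, rfl⟩
          · exact ⟨0, (RRR p).symm⟩
        · rw [this h]
          fin_cases i
          · exact ⟨2, rfl⟩
          · exact ⟨0, (RRR p).symm⟩
          · exact ⟨1, (RRR _).symm⟩
      · rintro _ ⟨i, rfl⟩
        fin_cases i
        · exact ⟨1, rfl⟩
        · exact ⟨2, rfl⟩
        · exact ⟨0, (RRR p).symm⟩
    have := Nat.card_le_card_of_surjective w hsurj
    rw [Nat.card_fin] at this
    have h6 : Nat.card (PSL2Z ⧸ Γ) = 6 := hi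
    omega
  obtain ⟨v, hv, hR, hS⟩ := abs6 hi (fun x => Sp • x) (fun x => (Sp * Tp) • x) SS RRR f2 f3
    x hx.1 hx.2
  rcases hS with hS | hS | hS
  · exact Or.inl ⟨v, hv, hS, hR⟩
  · exfalso
    have e2 := nOrb_of_bij hv Sp _ hS (m := 3) ![0, 1, 2, 0, 1, 2]
      (by decide) (by decide) (by decide)
    have e3 := nOrb_of_bij hv (Sp * Tp) _ hR (m := 2) ![0, 0, 0, 1, 1, 1]
      (by decide) (by decide) (by decide)
    have eT := nOrb_of_bij hv Tp _ (T_smul_of hS hR) (m := 1) ![0, 0, 0, 0, 0, 0]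
      (by decide) (by decide) (by decide)
    rw [GenusZero] at hg
    omega
  · exact Or.inr ⟨v, hv, hS, hR⟩

lemma classify (hi : Γ.index ≠ 0) (hg : GenusZero Γ) (ht : tfIdx Γ = 6) :
    M1 Γ ∨ M2 Γ ∨ M3 Γ ∨ M4 Γ ∨ M5 Γ ∨ M6 Γ := by
  rw [tfIdx] at ht
  have h : Γ.index = 1 ∨ Γ.index = 2 ∨ Γ.index = 3 ∨ Γ.index = 4 ∨ Γ.index = 6 := by omega
  rcases h with h | h | h | h | h
  · exact Or.inl (class1 h)
  · exact Or.inr (Or.inl (class2 h (by omega) (by omega)))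
  · exact Or.inr (Or.inr (Or.inl (class3 h (by omega) (by omega))))
  · exact Or.inr (Or.inr (Or.inr (Or.inl (class4 h (by omega) (by omega)))))
  · exact Or.inr (Or.inr (Or.inr (Or.inr (class6 h (by omega) (by omega) hg))))

end classify
/-! ### Existence of the six groups -/

/-- The subgroup attached to an equivariant labelling `f`. -/
def labelSubgroup {n : ℕ} (f : PSL2Z → Fin n)
    (hf : ∀ h g g', f g = f g' ↔ f (h * g) = f (h * g')) : Subgroup PSL2Z where
  carrier := {g | f g = f 1}
  one_mem' := rfl
  mul_mem' := by
    intro a b ha hb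
    have := (hf a b 1).1 hb
    rw [mul_one] at this
    exact this.trans ha
  inv_mem' := by
    intro a ha
    have := (hf a⁻¹ a 1).1 ha
    rw [mul_one, inv_mul_cancel] at this
    exact this.symm

lemma exists_model_label {n : ℕ} (f : PSL2Z → Fin n) (σ τ : Fin n → Fin n)
    (hσ : Function.Injective σ) (hτ : Function.Injective τ)
    (hS : ∀ g, f (Sp * g) = σ (f g)) (hR : ∀ g, f (Sp * Tp * g) = τ (f g))
    (htr : ∀ s : Finset (Fin n), s.Nonempty → (∀ i ∈ s, σ i ∈ s) → (∀ i ∈ s, τ i ∈ s) →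
      ∀ i, i ∈ s) :
    ∃ Γ : Subgroup PSL2Z, HasModel Γ n σ τ ∧ ∀ g, g ∈ Γ ↔ f g = f 1 := by
  have hf : ∀ h g g', f g = f g' ↔ f (h * g) = f (h * g') := by
    let H : Subgroup PSL2Z :=
      { carrier := {h | ∀ g g', f g = f g' ↔ f (h * g) = f (h * g')}
        one_mem' := by intro g g'; simp
        mul_mem' := by
          intro a b ha hb g g'
          rw [mul_assoc, mul_assoc, hb g g', ha]
        inv_mem' := by
          intro a ha g g'
          rw [ha (a⁻¹ * g) (a⁻¹ * g'), mul_inv_cancel_left, mul_inv_cancel_left] }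
    intro h
    refine gen_top H ?_ ?_ h
    · intro g g'; rw [hS, hS, hσ.eq_iff]
    · intro g g'; rw [hR, hR, hτ.eq_iff]
  have hsurj : Function.Surjective f := by
    classical
    have := htr (Finset.univ.filter (fun i => ∃ g, f g = i)) ⟨f 1, by simp⟩ ?_ ?_
    · intro i; simpa using this i
    · intro i hi
      simp only [Finset.mem_filter, Finset.mem_univ, true_and] at hi ⊢
      obtain ⟨g, rfl⟩ := hi
      exact ⟨_, hS g⟩
    · intro i hi
      simp only [Finset.mem_filter, Finset.mem_univ, true_and] at hi ⊢
      obtain ⟨g, rfl⟩ := hi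
      exact ⟨_, hR g⟩
  choose rep hrep using hsurj
  have hmk : ∀ a b : PSL2Z, ((a : PSL2Z ⧸ labelSubgroup f hf) = (b : PSL2Z ⧸ labelSubgroup f hf)) ↔
      f a = f b := by
    intro a b
    rw [QuotientGroup.eq]
    change f (a⁻¹ * b) = f 1 ↔ _
    rw [hf a (a⁻¹ * b) 1, mul_inv_cancel_left, mul_one, eq_comm]
  refine ⟨labelSubgroup f hf, ⟨fun i => (rep i : PSL2Z ⧸ labelSubgroup f hf), ⟨?_, ?_⟩, ?_, ?_⟩,
    fun g => Iff.rfl⟩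
  · intro i j hij
    have := (hmk _ _).1 hij
    rwa [hrep, hrep] at this
  · intro x
    obtain ⟨g, rfl⟩ := QuotientGroup.mk_surjective x
    exact ⟨f g, (hmk _ _).2 (hrep _)⟩
  · intro i
    rw [MulAction.Quotient.smul_coe]
    refine (hmk _ _).2 ?_
    rw [smul_eq_mul, hS, hrep, hrep]
  · intro i
    rw [MulAction.Quotient.smul_coe]
    refine (hmk _ _).2 ?_
    rw [smul_eq_mul, hR, hrep, hrep]

lemma mem_pmOne {A : SL2Z} (h : A ∈ pmOne) : A = 1 ∨ A = -1 := by
  obtain ⟨k, rfl⟩ := h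
  rcases Int.even_or_odd k with hk | hk
  · left; exact hk.neg_one_zpow
  · right; exact hk.neg_one_zpow

lemma exists_model_mod (N n : ℕ) (C : ZMod N → ZMod N → ZMod N → ZMod N → Fin n)
    (σ τ : Fin n → Fin n)
    (hσ : Function.Injective σ) (hτ : Function.Injective τ)
    (htr : ∀ s : Finset (Fin n), s.Nonempty → (∀ i ∈ s, σ i ∈ s) → (∀ i ∈ s, τ i ∈ s) →
      ∀ i, i ∈ s)
    (hC : ∀ a b c d, a * d - b * c = 1 → C (-a) (-b) (-c) (-d) = C a b c d ∧
      C (-c) (-d) a b = σ (C a b c d) ∧ C (-c) (-d) (a + c) (b + d) = τ (C a b c d)) :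
    ∃ Γ : Subgroup PSL2Z, HasModel Γ n σ τ ∧ ∀ A : SL2Z, xi A ∈ Γ ↔
      C (A 0 0 : ℤ) (A 0 1 : ℤ) (A 1 0 : ℤ) (A 1 1 : ℤ) = C 1 0 0 1 := by
  let F : SL2Z → Fin n := fun A => C (A 0 0 : ℤ) (A 0 1 : ℤ) (A 1 0 : ℤ) (A 1 1 : ℤ)
  have hdet : ∀ A : SL2Z, ((A 0 0 : ℤ) : ZMod N) * (A 1 1 : ℤ) - (A 0 1 : ℤ) * (A 1 0 : ℤ) = 1 := by
    intro A
    have := A.det_coe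
    rw [Matrix.det_fin_two] at this
    exact_mod_cast congrArg (Int.cast : ℤ → ZMod N) this
  have hneg : ∀ A, F (-A) = F A := by
    intro A
    have := (hC _ _ _ _ (hdet A)).1
    simpa [F] using this
  let f : PSL2Z → Fin n := Quotient.lift F (by
    intro A B hAB
    have h := QuotientGroup.leftRel_apply.1 hAB
    rcases mem_pmOne h with h | h
    · rw [inv_mul_eq_one.1 h]
    · have : B = -A := by
        rw [inv_mul_eq_iff_eq_mul] at h
        rw [h]; simp
      rw [this, hneg])
  have hfx : ∀ A, f (xi A) = F A := fun A => rfl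
  have hsur : ∀ g : PSL2Z, ∃ A, xi A = g := QuotientGroup.mk'_surjective pmOne
  have hS : ∀ g, f (Sp * g) = σ (f g) := by
    intro g
    obtain ⟨A, rfl⟩ := hsur g
    rw [Sp_def, ← map_mul, hfx, hfx]
    have := (hC _ _ _ _ (hdet A)).2.1
    simpa [F, ModularGroup.coe_S, Matrix.mul_apply, Fin.sum_univ_two] using this
  have hR : ∀ g, f (Sp * Tp * g) = τ (f g) := by
    intro g
    obtain ⟨A, rfl⟩ := hsur g
    rw [Sp_def, Tp_def, ← map_mul, ← map_mul, hfx, hfx]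
    have := (hC _ _ _ _ (hdet A)).2.2
    simpa [F, ModularGroup.coe_S, ModularGroup.coe_T, Matrix.mul_apply, Fin.sum_univ_two] using this
  obtain ⟨Γ, hΓ, hmem⟩ := exists_model_label f σ τ hσ hτ hS hR htr
  refine ⟨Γ, hΓ, fun A => ?_⟩
  rw [hmem, ← map_one xi, hfx, hfx]
  simp [F]

/-- Label of an element of `SL(2, ZMod 2)`. -/
def lab2 : Fin 2 → Fin 2 → Fin 2 → Fin 2 → Fin 6 :=
  ![![![![0, 0], ![0, 0]], ![![0, 0], ![3, 1]]], ![![![0, 0], ![0, 4]], ![![0, 5], ![2, 0]]]]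

/-- Labels of the points of the projective line over `ZMod 2`. -/
def proj2 : ZMod 2 → ZMod 2 → Fin 3 :=
  (![![0, 2], ![1, 0]] : Fin 2 → Fin 2 → Fin 3)

/-- Labels of the points of the projective line over `ZMod 3`. -/
def proj3 : ZMod 3 → ZMod 3 → Fin 4 :=
  (![![0, 3, 3], ![2, 0, 1], ![2, 1, 0]] : Fin 3 → Fin 3 → Fin 4)

/-- Labels of the points of the projective line over `ZMod 4`. -/
def proj4 : ZMod 4 → ZMod 4 → Fin 6 :=
  (![![0, 5, 0, 5], ![4, 0, 1, 3], ![0, 2, 0, 2], ![4, 3, 1, 0]] : Fin 4 → Fin 4 → Fin 6)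

lemma exM1 : ∃ Γ, M1 Γ := by
  obtain ⟨Γ, h, -⟩ := exists_model_mod 1 1 (fun _ _ _ _ => 0) ![0] ![0]
    (by decide) (by decide) (by decide) (by decide)
  exact ⟨Γ, h⟩

lemma exM2 : ∃ Γ, M2 Γ := by
  obtain ⟨Γ, h, -⟩ := exists_model_mod 2 2
    (fun a b c d => ![0, 0, 0, 1, 1, 1] (lab2 a b c d)) ![1, 0] ![0, 1]
    (by decide) (by decide) (by decide) (by decide)
  exact ⟨Γ, h⟩

lemma exM3 : ∃ Γ, M3 Γ := by
  obtain ⟨Γ, h, -⟩ := exists_model_mod 2 3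
    (fun a _ c _ => proj2 a c) ![0, 2, 1] ![1, 2, 0]
    (by decide) (by decide) (by decide) (by decide)
  exact ⟨Γ, h⟩

lemma exM4 : ∃ Γ, M4 Γ := by
  obtain ⟨Γ, h, -⟩ := exists_model_mod 3 4
    (fun a _ c _ => proj3 a c)
    ![1, 0, 3, 2] ![0, 2, 3, 1]
    (by decide) (by decide) (by decide) (by decide)
  exact ⟨Γ, h⟩

/-! ### Torsion -/

lemma parabolic_pow (A : SL2Z) (t : ℤ) (ht : (A 0 0 : ℤ) + A 1 1 = t) (h2 : 2 ≤ t) (m : ℕ) :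
    ∃ u w : ℤ, 0 ≤ w ∧ w < u ∧ (A ^ (m + 1)) 0 1 = u * A 0 1 ∧ (A ^ (m + 1)) 1 0 = u * A 1 0 ∧
      (A ^ (m + 1)) 0 0 = u * A 0 0 - w ∧ (A ^ (m + 1)) 1 1 = u * A 1 1 - w := by
  have hd := A.det_coe
  rw [Matrix.det_fin_two] at hd
  induction m with
  | zero => exact ⟨1, 0, by simp⟩
  | succ m ih =>
    obtain ⟨u, w, hw, huw, h01, h10, h00, h11⟩ := ih
    refine ⟨t * u - w, u, by omega, by nlinarith, ?_, ?_, ?_, ?_⟩ <;>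
    · rw [pow_succ, Matrix.SpecialLinearGroup.coe_mul, Matrix.mul_apply, Fin.sum_univ_two]
      simp only [h01, h10, h00, h11]
      subst ht
      first
        | ring1
        | linear_combination (-u) * hd
        | linear_combination u * hd

lemma torsion_aux (A : SL2Z) (m : ℕ) (h2 : 2 ≤ (A 0 0 : ℤ) + A 1 1) (hA : A ^ (m + 1) = 1) :
    A ∈ pmOne := by
  obtain ⟨u, w, hw, huw, h01, h10, h00, h11⟩ := parabolic_pow A _ rfl h2 m
  have hd := A.det_coe
  rw [Matrix.det_fin_two] at hd
  rw [hA] at h01 h10 h00 h11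
  have hu : u ≠ 0 := by omega
  have z01 : A 0 1 = 0 := by simpa [hu] using h01
  have z10 : A 1 0 = 0 := by simpa [hu] using h10
  rw [z01, z10] at hd
  have hd' : A 0 0 * A 1 1 = 1 := by linarith
  have hA1 : A = 1 := by
    rcases Int.mul_eq_one_iff_eq_one_or_neg_one.1 hd' with ⟨a, b⟩ | ⟨a, b⟩
    · ext i j
      fin_cases i <;> fin_cases j <;> simp [a, b, z01, z10]
    · omega
  rw [hA1]
  exact pmOne.one_mem

lemma torsionFree_of {Γ : Subgroup PSL2Z}
    (h : ∀ A : SL2Z, xi A ∈ Γ → 2 ≤ |(A 0 0 : ℤ) + A 1 1|) : TorsionFree Γ := by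
  intro x hx hne hfin
  obtain ⟨A, rfl⟩ : ∃ A, xi A = x := QuotientGroup.mk'_surjective pmOne x
  apply hne
  refine (QuotientGroup.eq_one_iff A).2 ?_
  obtain ⟨k, hk, hk1⟩ := isOfFinOrder_iff_pow_eq_one.1 hfin
  rw [← map_pow] at hk1
  have hk2 : A ^ k ∈ pmOne := (QuotientGroup.eq_one_iff (A ^ k)).1 hk1
  have hk3 : A ^ (2 * k) = 1 := by
    rw [mul_comm, pow_mul]
    rcases mem_pmOne hk2 with h | h <;> rw [h] <;> simp
  obtain ⟨m, hm⟩ : ∃ m, 2 * k = m + 1 := ⟨2 * k - 1, by omega⟩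
  have habs := h A hx
  rcases le_abs.1 habs with h | h
  · exact torsion_aux A m h (by rw [← hm]; exact hk3)
  · have : -A ∈ pmOne := by
      refine torsion_aux (-A) m ?_ ?_
      · simp; linarith
      · rw [← hm, Even.neg_pow (even_two_mul k)]; exact hk3
    rcases mem_pmOne this with h | h
    · rw [neg_eq_iff_eq_neg] at h
      rw [h]; exact Subgroup.mem_zpowers _
    · rw [neg_inj] at h
      rw [h]; exact pmOne.one_mem

lemma two_le_of_mod {t : ℤ} (h : (t : ZMod 4) = 2) : 2 ≤ |t| := by
  have h' : ((t - 2 : ℤ) : ZMod 4) = 0 := by push_cast; rw [h]; decide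
  rw [ZMod.intCast_zmod_eq_zero_iff_dvd] at h'
  rw [le_abs]
  omega

lemma det_cast (N : ℕ) (A : SL2Z) :
    ((A 0 0 : ℤ) : ZMod N) * (A 1 1 : ℤ) - (A 0 1 : ℤ) * (A 1 0 : ℤ) = 1 := by
  have := A.det_coe
  rw [Matrix.det_fin_two] at this
  exact_mod_cast congrArg (Int.cast : ℤ → ZMod N) this

lemma exM5 : ∃ Γ, M5 Γ ∧ TorsionFree Γ := by
  obtain ⟨Γ, h, hm⟩ := exists_model_mod 4 6
    (fun a _ c _ => proj4 a c)
    ![3, 2, 1, 0, 5, 4] ![1, 2, 0, 4, 5, 3]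
    (by decide) (by decide) (by decide) (by decide)
  refine ⟨Γ, h, torsionFree_of fun A hA => two_le_of_mod ?_⟩
  rw [hm] at hA
  have hd := det_cast 4 A
  push_cast
  revert hA hd
  generalize ((A 0 0 : ℤ) : ZMod 4) = a
  generalize ((A 0 1 : ℤ) : ZMod 4) = b
  generalize ((A 1 0 : ℤ) : ZMod 4) = c
  generalize ((A 1 1 : ℤ) : ZMod 4) = d
  revert a b c d
  decide

/-- Reduction from `ZMod 4` to `Fin 2`. -/
def red42 : ZMod 4 → Fin 2 := ![0, 1, 0, 1]

lemma exM6 : ∃ Γ, M6 Γ ∧ TorsionFree Γ := by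
  obtain ⟨Γ, h, hm⟩ := exists_model_mod 4 6
    (fun a b c d => lab2 (red42 a) (red42 b) (red42 c) (red42 d))
    ![3, 5, 4, 0, 2, 1] ![1, 2, 0, 4, 5, 3]
    (by decide) (by decide) (by decide) (by decide)
  refine ⟨Γ, h, torsionFree_of fun A hA => two_le_of_mod ?_⟩
  rw [hm] at hA
  have hd := det_cast 4 A
  push_cast
  revert hA hd
  generalize ((A 0 0 : ℤ) : ZMod 4) = a
  generalize ((A 0 1 : ℤ) : ZMod 4) = b
  generalize ((A 1 0 : ℤ) : ZMod 4) = c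
  generalize ((A 1 1 : ℤ) : ZMod 4) = d
  revert a b c d
  decide

lemma not_tf_of_fix {Γ : Subgroup PSL2Z} {g : PSL2Z} (hg : g ≠ 1) (hfin : IsOfFinOrder g)
    {x : PSL2Z ⧸ Γ} (hx : g • x = x) : ¬ TorsionFree Γ := by
  intro htf
  obtain ⟨k, rfl⟩ := QuotientGroup.mk_surjective x
  rw [MulAction.Quotient.smul_coe, eq_comm, QuotientGroup.eq, smul_eq_mul, ← mul_assoc] at hx
  refine htf _ hx ?_ ?_
  · intro h
    apply hg
    have : k * (k⁻¹ * g * k) * k⁻¹ = k * 1 * k⁻¹ := by rw [h]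
    simpa [mul_assoc] using this
  · obtain ⟨n, hn, h1⟩ := isOfFinOrder_iff_pow_eq_one.1 hfin
    refine isOfFinOrder_iff_pow_eq_one.2 ⟨n, hn, ?_⟩
    have := conj_pow (i := n) (a := k⁻¹) (b := g)
    rw [inv_inv] at this
    rw [this, h1]; simp

lemma Sp_ne : Sp ≠ 1 := by
  intro h
  rcases mem_pmOne ((QuotientGroup.eq_one_iff ModularGroup.S).1 h) with h | h <;>
  · have := congrArg (fun A : SL2Z => A 0 1) h
    simp [ModularGroup.S] at this

lemma R_ne : Sp * Tp ≠ 1 := by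
  intro h
  rw [Sp_def, Tp_def, ← map_mul] at h
  rcases mem_pmOne ((QuotientGroup.eq_one_iff (ModularGroup.S * ModularGroup.T)).1 h) with h | h <;>
  · have := congrArg (fun A : SL2Z => A 0 1) h
    simp [ModularGroup.coe_S, ModularGroup.coe_T, Matrix.mul_apply, Fin.sum_univ_two] at this

lemma Sp_fin : IsOfFinOrder Sp :=
  isOfFinOrder_iff_pow_eq_one.2 ⟨2, by norm_num, by rw [pow_two, Sp_sq]⟩

lemma R_fin : IsOfFinOrder (Sp * Tp) :=
  isOfFinOrder_iff_pow_eq_one.2 ⟨3, by norm_num, by rw [pow_succ', pow_two, R_cube]⟩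

lemma M1_ntf {Γ} (h : M1 Γ) : ¬ TorsionFree Γ := by
  obtain ⟨v, -, hS, -⟩ := h
  exact not_tf_of_fix Sp_ne Sp_fin (hS 0)
lemma M2_ntf {Γ} (h : M2 Γ) : ¬ TorsionFree Γ := by
  obtain ⟨v, -, -, hR⟩ := h
  exact not_tf_of_fix R_ne R_fin (hR 0)
lemma M3_ntf {Γ} (h : M3 Γ) : ¬ TorsionFree Γ := by
  obtain ⟨v, -, hS, -⟩ := h
  exact not_tf_of_fix Sp_ne Sp_fin (hS 0)
lemma M4_ntf {Γ} (h : M4 Γ) : ¬ TorsionFree Γ := by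
  obtain ⟨v, -, -, hR⟩ := h
  exact not_tf_of_fix R_ne R_fin (hR 0)

/-! ### Conjugacy -/

lemma conj_equiv : Equivalence (fun H K : Subgroup PSL2Z => SubgroupConj H K) where
  refl H := ⟨1, by ext x; simp⟩
  symm := by
    rintro H K ⟨g, rfl⟩
    refine ⟨g⁻¹, ?_⟩
    ext x
    simp [Subgroup.mem_map, mul_assoc]
  trans := by
    rintro H K L ⟨g, rfl⟩ ⟨k, rfl⟩
    refine ⟨k * g, ?_⟩
    ext x
    simp [Subgroup.mem_map, mul_assoc]

lemma index_conj {H K : Subgroup PSL2Z} (h : SubgroupConj H K) : H.index = K.index := by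
  obtain ⟨g, rfl⟩ := h
  exact (Subgroup.index_map_equiv H (MulAut.conj g)).symm

lemma tf_conj {H K : Subgroup PSL2Z} (h : SubgroupConj H K) (hK : TorsionFree K) :
    TorsionFree H := by
  obtain ⟨g, rfl⟩ := h
  intro x hx hne hfin
  refine hK (MulAut.conj g x) ⟨x, hx, rfl⟩ ?_ ?_
  · simpa using hne
  · exact (MulAut.conj g).toMonoidHom.isOfFinOrder hfin

lemma Tfix_conj {H K : Subgroup PSL2Z} (h : SubgroupConj H K)
    (hH : ∃ x : PSL2Z ⧸ H, Tp • x = x) : ∃ x : PSL2Z ⧸ K, Tp • x = x := by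
  obtain ⟨g, rfl⟩ := h
  obtain ⟨x, hx⟩ := hH
  obtain ⟨k, rfl⟩ := QuotientGroup.mk_surjective x
  rw [MulAction.Quotient.smul_coe, eq_comm, QuotientGroup.eq, smul_eq_mul] at hx
  refine ⟨((k * g⁻¹ : PSL2Z) : PSL2Z ⧸ _), ?_⟩
  rw [MulAction.Quotient.smul_coe, eq_comm, QuotientGroup.eq, smul_eq_mul]
  exact ⟨_, hx, by simp [mul_assoc]⟩

lemma M56_not_conj {Γ Γ'} (h : M5 Γ) (h' : M6 Γ') : ¬ SubgroupConj Γ Γ' := by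
  intro hc
  obtain ⟨v, hv, hS, hR⟩ := h
  obtain ⟨x, hx⟩ := Tfix_conj hc ⟨v 1, T_smul_of hS hR 1⟩
  obtain ⟨w, hw, hS', hR'⟩ := h'
  obtain ⟨i, rfl⟩ := hw.2 x
  rw [T_smul_of hS' hR', hw.1.eq_iff] at hx
  revert hx
  revert i
  decide

lemma count_eq (P : Subgroup PSL2Z → Prop) (m : ℕ) (K : Fin m → Subgroup PSL2Z)
    (hP : ∀ i, P (K i)) (hcov : ∀ Γ, P Γ → ∃ i, SubgroupConj (K i) Γ)
    (hne : ∀ i j, i < j → ¬ SubgroupConj (K i) (K j)) : countClasses P = m := by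
  have heq : Equivalence (fun A B : {Γ : Subgroup PSL2Z // P Γ} => SubgroupConj A.1 B.1) :=
    conj_equiv.comap Subtype.val
  let F : Fin m → Quot (fun A B : {Γ : Subgroup PSL2Z // P Γ} => SubgroupConj A.1 B.1) :=
    fun i => Quot.mk _ ⟨K i, hP i⟩
  have hF : Function.Bijective F := by
    constructor
    · intro i j hij
      have hc : SubgroupConj (K i) (K j) := (heq.quot_mk_eq_iff _ _).1 hij
      rcases lt_trichotomy i j with h | h | h
      · exact absurd hc (hne _ _ h)
      · exact h
      · exact absurd (conj_equiv.symm hc) (hne _ _ h)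
    · intro q
      induction q using Quot.inductionOn with | _ A
      obtain ⟨i, hi⟩ := hcov A.1 A.2
      exact ⟨i, Quot.sound hi⟩
  rw [countClasses, ← Nat.card_eq_of_bijective F hF, Nat.card_fin]

lemma model_index {Γ n σ τ} (h : HasModel Γ n σ τ) : Γ.index = n := by
  obtain ⟨v, hv, -, -⟩ := h
  exact index_of_bij hv

/-- There are exactly 6 conjugacy classes of genus-zero finite-index subgroups `Γ` of
`PSL(2,ℤ)` with `n + 3e₂ + 2e₃ = 6`; exactly 2 of them are torsion free and exactly 4
contain a nontrivial element of finite order. -/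
theorem count_K6 :
    countClasses (fun Γ => Γ.index ≠ 0 ∧ GenusZero Γ ∧ tfIdx Γ = 6) = 6 ∧
    countClasses (fun Γ => Γ.index ≠ 0 ∧ GenusZero Γ ∧ tfIdx Γ = 6 ∧ TorsionFree Γ) = 2 ∧
    countClasses (fun Γ => Γ.index ≠ 0 ∧ GenusZero Γ ∧ tfIdx Γ = 6 ∧ ¬ TorsionFree Γ) = 4 := by
  obtain ⟨K1, h1⟩ := exM1
  obtain ⟨K2, h2⟩ := exM2
  obtain ⟨K3, h3⟩ := exM3
  obtain ⟨K4, h4⟩ := exM4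
  obtain ⟨K5, h5, t5⟩ := exM5
  obtain ⟨K6, h6, t6⟩ := exM6
  have i1 := model_index h1
  have i2 := model_index h2
  have i3 := model_index h3
  have i4 := model_index h4
  have i5 := model_index h5
  have i6 := model_index h6
  have n56 := M56_not_conj h5 h6
  have p1 := M1_props h1
  have p2 := M2_props h2
  have p3 := M3_props h3
  have p4 := M4_props h4
  have p5 := M5_props h5
  have p6 := M6_props h6
  refine ⟨count_eq _ 6 ![K1, K2, K3, K4, K5, K6] ?_ ?_ ?_, count_eq _ 2 ![K5, K6] ?_ ?_ ?_,
    count_eq _ 4 ![K1, K2, K3, K4] ?_ ?_ ?_⟩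
  · intro i
    fin_cases i
    exacts [p1, p2, p3, p4, p5, p6]
  · rintro Γ ⟨hi, hg, ht⟩
    rcases classify hi hg ht with h | h | h | h | h | h
    · exact ⟨0, conj_of_model h1 h⟩
    · exact ⟨1, conj_of_model h2 h⟩
    · exact ⟨2, conj_of_model h3 h⟩
    · exact ⟨3, conj_of_model h4 h⟩
    · exact ⟨4, conj_of_model h5 h⟩
    · exact ⟨5, conj_of_model h6 h⟩
  · intro i j hij hc
    have hx := index_conj hc
    fin_cases i <;> fin_cases j <;> first
      | exact absurd hij (by decide)
      | exact n56 hc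
      | (simp [i1, i2, i3, i4, i5, i6] at hx)
  · intro i
    fin_cases i
    exacts [⟨p5.1, p5.2.1, p5.2.2, t5⟩, ⟨p6.1, p6.2.1, p6.2.2, t6⟩]
  · rintro Γ ⟨hi, hg, ht, htf⟩
    rcases classify hi hg ht with h | h | h | h | h | h
    · exact absurd htf (M1_ntf h)
    · exact absurd htf (M2_ntf h)
    · exact absurd htf (M3_ntf h)
    · exact absurd htf (M4_ntf h)
    · exact ⟨0, conj_of_model h5 h⟩
    · exact ⟨1, conj_of_model h6 h⟩
  · intro i j hij hc
    fin_cases i <;> fin_cases j <;> first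
      | exact absurd hij (by decide)
      | exact n56 hc
  · intro i
    fin_cases i
    exacts [⟨p1.1, p1.2.1, p1.2.2, M1_ntf h1⟩, ⟨p2.1, p2.2.1, p2.2.2, M2_ntf h2⟩,
      ⟨p3.1, p3.2.1, p3.2.2, M3_ntf h3⟩, ⟨p4.1, p4.2.1, p4.2.2, M4_ntf h4⟩]
  · rintro Γ ⟨hi, hg, ht, htf⟩
    rcases classify hi hg ht with h | h | h | h | h | h
    · exact ⟨0, conj_of_model h1 h⟩
    · exact ⟨1, conj_of_model h2 h⟩
    · exact ⟨2, conj_of_model h3 h⟩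
    · exact ⟨3, conj_of_model h4 h⟩
    · exact absurd (tf_conj (conj_of_model h h5) t5) htf
    · exact absurd (tf_conj (conj_of_model h h6) t6) htf
  · intro i j hij hc
    have hx := index_conj hc
    fin_cases i <;> fin_cases j <;> first
      | exact absurd hij (by decide)
      | (simp [i1, i2, i3, i4] at hx)
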